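/- arXiv:2605.13385 — 6 statements merged into one kernel-verified Lean document; each statement's English description precedes it below -/
import Mathlib

section
/- Let A = (Q, Σ, ·, s, F) be a minimal complete deterministic finite automaton, i.e., every complete DFA accepting the language L(A) has at least |Q| states. Then asc(L(A)) = |F|; that is, the minimum number of accepting states among all complete DFAs accepting L(A) equals the number of final states of A. -/
/-!
The states of a minimal DFA are in bijection with the left quotients (Myhill–Nerode classes) of
its language `L`: sending a quotient `x⁻¹L` to the state reached by a chosen representative `x`
is injective, and minimality compared with the quotient automaton `L.toDFA` makes it surjective
(`exists_access_words`). Hence every state `q` has an access word `w q`, and distinct states have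
access words with distinct left quotients. Any DFA `M` for `L` must send words with distinct left
quotients to distinct states, so `q ↦ M.eval (w q)` is injective; it maps final states to final
states, whence `M` has at least as many final states as `A`.
-/

/-- Accepting-state complexity: the minimum number of accepting (final) states among
all complete DFAs (with finite state set) accepting the language `L`. -/
noncomputable def asc {α : Type} (L : Language α) : ℕ :=
  sInf {k | ∃ (σ : Type) (_ : Finite σ) (M : DFA α σ),
    M.accepts = L ∧ Nat.card M.accept = k}

/-- In a minimal DFA every state is reachable, by words that are pairwise Myhill–Nerode
inequivalent. -/
theorem exists_access_words {α σ : Type} [Finite σ] (A : DFA α σ)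
    (hmin : ∀ (σ' : Type) (_ : Finite σ') (M : DFA α σ'),
      M.accepts = A.accepts → Nat.card σ ≤ Nat.card σ') :
    ∃ w : σ → List α, (∀ q, A.eval (w q) = q) ∧
      Function.Injective fun q => A.accepts.leftQuotient (w q) := by
  have hreg : A.accepts.IsRegular := Language.isRegular_iff.2 ⟨σ, Fintype.ofFinite σ, A, rfl⟩
  have hfin : Finite (Set.range A.accepts.leftQuotient) :=
    hreg.finite_range_leftQuotient.to_subtype
  have hcard := hmin _ hfin A.accepts.toDFA (Language.accepts_toDFA _)
  choose u hu using fun s : Set.range A.accepts.leftQuotient => s.2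
  have hinj : Function.Injective fun s => A.eval (u s) := by
    intro s t hst
    apply Subtype.ext
    rw [← hu s, ← hu t, Language.leftQuotient_accepts_apply, Language.leftQuotient_accepts_apply]
    exact congrArg A.acceptsFrom hst
  have hbij : Function.Bijective fun s => A.eval (u s) :=
    hinj.bijective_of_nat_card_le hcard
  choose s hs using hbij.2
  refine ⟨fun q => u (s q), hs, fun p q hpq => ?_⟩
  have hpq' : s p = s q := Subtype.ext (by simpa only [hu] using hpq)
  rw [← hs p, ← hs q, hpq']

/-- If `A` is a minimal complete DFA — i.e. every complete DFA
accepting `L(A)` has at least `|Q|` states — then `asc(L(A)) = |F|`: the minimum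
number of accepting states among all complete DFAs accepting `L(A)` equals the
number of final states of `A`. -/
theorem stmt0 {α σ : Type} [Finite σ] (A : DFA α σ)
    (hmin : ∀ (σ' : Type) (_ : Finite σ') (M : DFA α σ'),
      M.accepts = A.accepts → Nat.card σ ≤ Nat.card σ') :
    asc A.accepts = Nat.card A.accept := by
  obtain ⟨w, hw, hinj⟩ := exists_access_words A hmin
  refine le_antisymm (Nat.sInf_le ⟨σ, inferInstance, A, rfl, rfl⟩) ?_
  -- `A` itself witnesses nonemptiness, so the infimum is not the junk value of `sInf ∅`.
  refine le_csInf ⟨_, σ, inferInstance, A, rfl, rfl⟩ ?_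
  rintro k ⟨σ', hσ', M, hM, rfl⟩
  have hmem (q : A.accept) : M.eval (w q) ∈ M.accept := by
    rw [← DFA.mem_accepts, hM, DFA.mem_accepts, hw]
    exact q.2
  refine Nat.card_le_card_of_injective
    (fun q : A.accept => (⟨M.eval (w q), hmem q⟩ : M.accept)) fun p q hpq => ?_
  apply Subtype.ext
  apply hinj
  have h : M.eval (w p) = M.eval (w q) := congrArg Subtype.val hpq
  simp only [← hM, Language.leftQuotient_accepts_apply, h]
end

section
/- Fix integers m ≥ 2 and α ≥ 2 and set n := m + α − 1. In the witness permutation automaton A_{m,α}, any two distinct states are distinguishable: for all α-element subsets X ≠ Y of [n] there exists a word w ∈ {a, b}* such that exactly one of X · w and Y · w belongs to the final-state set F = 𝒮(T₀). Consequently A_{m,α} is a minimal DFA. -/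
/-!
The letters act on `Fin n` as an `n`-cycle `σ` and as `swap 0 (σ 0)`, which generate the symmetric
group; as that group is finite, they generate it as a monoid, so every permutation is the action
of some word (`exists_word`). Hence words carry any subset of `Fin n` to any other one of the same
size, and in particular every state is reachable (`exists_word_map_eq`).

Given distinct `α`-sets `X ≠ Y`, pick `x ∈ X \ Y` and an `(α - 1)`-set `T` with `x ∈ T ⊆ X`, which
is possible because `α - 1 ≥ 1`. A word taking `T` to `T₀` puts `X` into the star of `T₀`, but
not `Y`, since `T ⊈ Y`.

For minimality, choose for each state a word reaching it. In a DFA with the same language these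
words lead to pairwise distinct states, because distinct states of the witness automaton are
distinguishable; so that DFA has at least `C(n, α)` states.
-/

/-- The transposition `(1 2)` on `[n]`, encoded on `Fin n` as the swap of `0` and `1`
(we label `[n] = {1, …, n}` by `Fin n = {0, …, n-1}`). -/
noncomputable def swap01 (n : ℕ) : Equiv.Perm (Fin n) :=
  if h : 2 ≤ n then Equiv.swap ⟨0, by omega⟩ ⟨1, by omega⟩ else 1

/-- The binary alphabet is `Bool`: the letter `a := false` acts as the `n`-cycle
`(1 2 … n)` and the letter `b := true` acts as the transposition `(1 2)`. -/
noncomputable def letterPerm (n : ℕ) : Bool → Equiv.Perm (Fin n)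
  | false => finRotate n
  | true => swap01 n

/-- The subset `{1, …, k}` of `[n]`, encoded as `{i : Fin n | i.val < k}`. -/
def seg (n k : ℕ) : Finset (Fin n) := Finset.univ.filter (fun i => (i : ℕ) < k)

/-- The star `𝒮(T)`: the family of all `a`-element subsets `X` of `[n]` with `T ⊆ X`. -/
def starFam (n a : ℕ) (T : Finset (Fin n)) : Set (Finset (Fin n)) :=
  {X | X.card = a ∧ T ⊆ X}

/-- The witness permutation automaton `A_{m,α}` (with `n = m + α - 1`): states are the
subsets of `[n]` (the relevant part being the `α`-element ones), each letter acts
elementwise via `letterPerm`, the initial state is `q_I = {1, …, α}` and the final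
states are the star `𝒮(T₀)` with `T₀ = {1, …, α-1}`. -/
noncomputable def witnessDFA (n a : ℕ) : DFA Bool (Finset (Fin n)) where
  step X c := X.map (letterPerm n c).toEmbedding
  start := seg n a
  accept := starFam n a (seg n (a - 1))

lemma letterPerm_closure (n : ℕ) (hn : 2 ≤ n) :
    Submonoid.closure (Set.range (letterPerm n)) = ⊤ := by
  obtain ⟨k, rfl⟩ := Nat.exists_eq_add_of_le' hn
  have h := Equiv.Perm.closure_cycle_adjacent_swap (isCycle_finRotate (n := k))
    (support_finRotate (n := k)) 0
  have hs : swap01 (k + 2) = Equiv.swap 0 (finRotate (k + 2) 0) := by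
    have h1 : finRotate (k + 2) 0 = 1 := by simp
    rw [h1, swap01, dif_pos hn]
    rfl
  have hr : Set.range (letterPerm (k + 2)) =
      {finRotate (k + 2), Equiv.swap 0 (finRotate (k + 2) 0)} := by
    rw [← hs]
    ext g
    simp [letterPerm]
  rw [hr, ← Subgroup.closure_toSubmonoid_of_finite, h]
  rfl

/-- Every permutation of `Fin n` is the action of some word. -/
lemma exists_word (n a : ℕ) (hn : 2 ≤ n) (g : Equiv.Perm (Fin n)) :
    ∃ w : List Bool, ∀ X, (witnessDFA n a).evalFrom X w = X.map g.toEmbedding := by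
  have hg : g ∈ Submonoid.closure (Set.range (letterPerm n)) := by
    rw [letterPerm_closure n hn]; trivial
  induction hg using Submonoid.closure_induction with
  | mem g hg =>
    obtain ⟨c, rfl⟩ := hg
    exact ⟨[c], fun X => rfl⟩
  | one =>
    exact ⟨[], fun X => Finset.map_refl.symm⟩
  | mul g h _ _ ihg ihh =>
    obtain ⟨u, hu⟩ := ihg
    obtain ⟨v, hv⟩ := ihh
    -- Words act on the right, so the factor applied first is read first.
    refine ⟨v ++ u, fun X => ?_⟩
    rw [DFA.evalFrom_of_append, hu, hv, Finset.map_map]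
    rfl

/-- Any subset of `Fin n` is carried to any other one of the same size by a permutation that some
word realizes. -/
lemma exists_word_map_eq (n a : ℕ) (hn : 2 ≤ n) (S T : Finset (Fin n)) (h : S.card = T.card) :
    ∃ (g : Equiv.Perm (Fin n)) (w : List Bool), S.map g.toEmbedding = T ∧
      ∀ X, (witnessDFA n a).evalFrom X w = X.map g.toEmbedding := by
  let g : Equiv.Perm (Fin n) := (Finset.equivOfCardEq h).extendSubtype
  obtain ⟨w, hw⟩ := exists_word n a hn g
  refine ⟨g, w, Finset.eq_of_subset_of_card_le ?_ (by simp [h]), hw⟩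
  intro y hy
  obtain ⟨x, hx, rfl⟩ := Finset.mem_map.1 hy
  exact (Finset.equivOfCardEq h).extendSubtype_mem x hx

lemma seg_card (n k : ℕ) (h : k ≤ n) : (seg n k).card = k := by
  simp [seg, Fin.card_filter_val_lt, h]

lemma distinguishable (n a : ℕ) (hn : 2 ≤ n) (ha : 2 ≤ a) (han : a ≤ n) (X Y : Finset (Fin n))
    (hX : X.card = a) (hY : Y.card = a) (hXY : X ≠ Y) :
    ∃ w : List Bool,
      ¬((witnessDFA n a).evalFrom X w ∈ (witnessDFA n a).accept ↔
        (witnessDFA n a).evalFrom Y w ∈ (witnessDFA n a).accept) := by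
  have hsub : ¬ X ⊆ Y := fun h => hXY (Finset.eq_of_subset_of_card_le h (by omega))
  obtain ⟨x, hx, hxY⟩ := Finset.not_subset.1 hsub
  obtain ⟨T, hxT, hTX, hT⟩ := Finset.exists_subsuperset_card_eq
    (Finset.singleton_subset_iff.2 hx) (n := a - 1) (by simp; omega) (by omega)
  obtain ⟨g, w, hg, hw⟩ := exists_word_map_eq n a hn T (seg n (a - 1))
    (by rw [hT, seg_card n (a - 1) (by omega)])
  refine ⟨w, fun h => hxY ?_⟩
  rw [hw, hw] at h
  have hXF : X.map g.toEmbedding ∈ (witnessDFA n a).accept :=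
    ⟨by simp [hX], hg ▸ Finset.map_subset_map.2 hTX⟩
  have hTY : T.map g.toEmbedding ⊆ Y.map g.toEmbedding := hg ▸ (h.1 hXF).2
  exact Finset.map_subset_map.1 hTY (hxT (Finset.mem_singleton_self x))

/-- In the witness permutation automaton `A_{m,α}` (with
`n = m + α - 1`), any two distinct states (`α`-element subsets of `[n]`) are
distinguishable: some word sends exactly one of them into the final-state set
`F = 𝒮(T₀)`. Consequently `A_{m,α}` is a minimal DFA: every complete DFA accepting
its language has at least `|Q| = C(n, α)` states. -/
theorem stmt7 (m a n : ℕ) (hm : 2 ≤ m) (ha : 2 ≤ a) (hn : n = m + a - 1) :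
    (∀ X Y : Finset (Fin n), X.card = a → Y.card = a → X ≠ Y →
      ∃ w : List Bool,
        ¬((witnessDFA n a).evalFrom X w ∈ (witnessDFA n a).accept ↔
          (witnessDFA n a).evalFrom Y w ∈ (witnessDFA n a).accept)) ∧
    (∀ (σ : Type) (_ : Finite σ) (M : DFA Bool σ),
      M.accepts = (witnessDFA n a).accepts → n.choose a ≤ Nat.card σ) := by
  have hn2 : 2 ≤ n := by omega
  have han : a ≤ n := by omega
  refine ⟨fun X Y => distinguishable n a hn2 ha han X Y, ?_⟩
  intro σ _ M hM
  have hreach : ∀ X : Finset.powersetCard a (Finset.univ : Finset (Fin n)),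
      ∃ w : List Bool, (witnessDFA n a).eval w = X := by
    intro X
    obtain ⟨g, w, hg, hw⟩ := exists_word_map_eq n a hn2 (seg n a) X
      (by rw [seg_card n a han, (Finset.mem_powersetCard.1 X.2).2])
    exact ⟨w, (hw _).trans hg⟩
  choose u hu using hreach
  have hinj : Function.Injective fun X => M.eval (u X) := by
    intro X Y hXY
    by_contra hne
    obtain ⟨w, hw⟩ := distinguishable n a hn2 ha han X Y (Finset.mem_powersetCard.1 X.2).2
      (Finset.mem_powersetCard.1 Y.2).2 (fun h => hne (Subtype.ext h))
    have key : ∀ Z : Finset.powersetCard a (Finset.univ : Finset (Fin n)),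
        (witnessDFA n a).evalFrom Z w ∈ (witnessDFA n a).accept ↔
        M.evalFrom (M.eval (u Z)) w ∈ M.accept := by
      intro Z
      have h : u Z ++ w ∈ M.accepts ↔ u Z ++ w ∈ (witnessDFA n a).accepts := by rw [hM]
      rw [DFA.mem_accepts, DFA.mem_accepts, DFA.eval, DFA.eval, DFA.evalFrom_of_append,
        DFA.evalFrom_of_append] at h
      rw [← hu Z]
      exact h.symm
    apply hw
    rw [key X, key Y]
    exact iff_of_eq (congrArg (fun s => M.evalFrom s w ∈ M.accept) hXY)
  have hcard := Nat.card_le_card_of_injective _ hinj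
  simpa using hcard
end

section
/- Fix integers m ≥ 2 and α ≥ 2 and set n := m + α − 1. In the reverse subset automaton A_{m,α}^R, reading a single letter maps stars to stars: for every (α−1)-element subset T of [n] and every letter c ∈ {a, b}, δ^R(𝒮(T), c) = 𝒮(T c⁻¹), where T c⁻¹ denotes the image of T under the inverse of the permutation of [n] induced by c. -/
/-- The reverse subset automaton `A^R` of a DFA `A`: states are subsets of the
state set of `A`, `δ^R(S, c) = {q : q·c ∈ S}`, the initial state is the set of
final states of `A`, and a subset is accepting iff it contains the start of `A`. -/
def reverseDFA {α σ : Type} (A : DFA α σ) : DFA α (Set σ) where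
  step S c := {q | A.step q c ∈ S}
  start := A.accept
  accept := {S | A.start ∈ S}

/-- In the reverse subset automaton `A_{m,α}^R` (with
`n = m + α - 1`), reading a single letter maps stars to stars: for every
`(α-1)`-element subset `T` of `[n]` and every letter `c`,
`δ^R(𝒮(T), c) = 𝒮(T c⁻¹)`, where `T c⁻¹` is the image of `T` under the inverse of
the permutation induced by `c`. -/
theorem stmt9 (m a n : ℕ) (hm : 2 ≤ m) (ha : 2 ≤ a) (hn : n = m + a - 1)
    (T : Finset (Fin n)) (hT : T.card = a - 1) (c : Bool) :
    (reverseDFA (witnessDFA n a)).step (starFam n a T) c =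
      starFam n a (T.map ((letterPerm n c)⁻¹).toEmbedding) := by
  ext X
  change (X.map (letterPerm n c).toEmbedding).card = a ∧ T ⊆ X.map (letterPerm n c).toEmbedding ↔
    X.card = a ∧ T.map ((letterPerm n c)⁻¹).toEmbedding ⊆ X
  generalize letterPerm n c = σ
  rw [Finset.card_map]
  refine and_congr_right fun _ => ?_
  -- A permutation preserves inclusion, so `T ⊆ X σ` can be translated by `σ⁻¹`.
  rw [← Finset.map_subset_map (f := σ⁻¹.toEmbedding), Finset.map_map]
  have h : σ.toEmbedding.trans σ⁻¹.toEmbedding = Function.Embedding.refl _ := by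
    ext x
    simp
  rw [h, Finset.map_refl]
end

section
/- Fix integers m ≥ 2 and α ≥ 2 and set n := m + α − 1. Every state of the reverse subset automaton A_{m,α}^R that is reachable from the initial state F = 𝒮(T₀) is a star: if S ⊆ Q is of the form δ^R(𝒮(T₀), w) for some word w ∈ {a, b}*, then S = 𝒮(T) for some (α−1)-element subset T of [n]. -/
/-- One step of the reverse subset automaton sends the star of `T` to the star of `T·c⁻¹`. -/
theorem reverse_step_starFam (n a : ℕ) (T : Finset (Fin n)) (c : Bool) :
    (reverseDFA (witnessDFA n a)).step (starFam n a T) c =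
      starFam n a (T.map (letterPerm n c).symm.toEmbedding) := by
  ext X
  simp only [reverseDFA, witnessDFA, starFam, Set.mem_ofPred_eq, Finset.card_map]
  refine and_congr_right fun _ => ?_
  simp only [Finset.subset_iff, Finset.mem_map_equiv, Equiv.symm_symm]
  constructor
  · intro h x hx
    simpa using h hx
  · intro h x hx
    exact h (by simpa using hx)

/-- Every state of the reverse subset automaton `A_{m,α}^R`
reachable from the initial state `F = 𝒮(T₀)` is a star: if `S = δ^R(𝒮(T₀), w)` for
some word `w ∈ {a,b}*`, then `S = 𝒮(T)` for some `(α-1)`-element subset `T` of `[n]`. -/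
theorem stmt10 (m a n : ℕ) (hm : 2 ≤ m) (ha : 2 ≤ a) (hn : n = m + a - 1)
    (w : List Bool) :
    ∃ T : Finset (Fin n), T.card = a - 1 ∧
      (reverseDFA (witnessDFA n a)).evalFrom (starFam n a (seg n (a - 1))) w =
        starFam n a T := by
  have h₀ : (seg n (a - 1)).card = a - 1 := by
    rw [seg, Fin.card_filter_val_lt]
    omega
  -- The centre must be arbitrary for the induction on the word.
  generalize seg n (a - 1) = T at h₀ ⊢
  induction w generalizing T with
  | nil => exact ⟨T, h₀, rfl⟩
  | cons c w ih =>
    rw [DFA.evalFrom_cons, reverse_step_starFam]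
    exact ih _ (by rw [Finset.card_map, h₀])
end

section
/- Fix integers m ≥ 2 and α ≥ 2 and set n := m + α − 1. Any two distinct reachable states of the reverse subset automaton A_{m,α}^R are distinguishable: for all (α−1)-element subsets S₀ ≠ T of [n] there exists a word w ∈ {a, b}* such that exactly one of the states δ^R(𝒮(S₀), w) and δ^R(𝒮(T), w) is accepting (i.e., contains q_I = {1,…,α}). Consequently, the reachable part of A_{m,α}^R is a minimal DFA. -/
/-- A permutation `π` is realised by a word if that word sends `𝒮(S)` to `𝒮(S·π)` for all
subsets `S` simultaneously. -/
def Realised (n a : ℕ) (π : Equiv.Perm (Fin n)) : Prop :=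
  ∃ w : List Bool, ∀ S : Finset (Fin n),
    (reverseDFA (witnessDFA n a)).evalFrom (starFam n a S) w =
      starFam n a (S.map π.toEmbedding)

lemma step_starFam (n a : ℕ) (S : Finset (Fin n)) (c : Bool) :
    (reverseDFA (witnessDFA n a)).step (starFam n a S) c =
      starFam n a (S.map (letterPerm n c)⁻¹.toEmbedding) := by
  ext X
  simp only [reverseDFA, witnessDFA, starFam, Set.mem_ofPred_eq, Finset.card_map]
  refine and_congr_right fun _ => ⟨fun h x hx => ?_, fun h x hx => ?_⟩
  · obtain ⟨y, hy, rfl⟩ := Finset.mem_map.1 hx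
    obtain ⟨z, hz, hzy⟩ := Finset.mem_map.1 (h hy)
    have : (letterPerm n c)⁻¹ y = z := by
      rw [← hzy]; simp
    simpa [this] using hz
  · refine Finset.mem_map.2 ⟨(letterPerm n c)⁻¹ x, h ?_, by simp⟩
    exact Finset.mem_map.2 ⟨x, hx, rfl⟩

lemma realised_one (n a : ℕ) : Realised n a 1 := by
  refine ⟨[], fun S => ?_⟩
  have : S.map (1 : Equiv.Perm (Fin n)).toEmbedding = S :=
    Finset.map_refl
  rw [this, DFA.evalFrom_nil]

lemma Realised.mul {n a : ℕ} {π ρ : Equiv.Perm (Fin n)} (hπ : Realised n a π)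
    (hρ : Realised n a ρ) : Realised n a (π * ρ) := by
  obtain ⟨u, hu⟩ := hπ
  obtain ⟨v, hv⟩ := hρ
  refine ⟨v ++ u, fun S => ?_⟩
  rw [DFA.evalFrom_of_append, hv, hu, Finset.map_map]
  rfl

lemma Realised.pow {n a : ℕ} {π : Equiv.Perm (Fin n)} (hπ : Realised n a π) (k : ℕ) :
    Realised n a (π ^ k) := by
  induction k with
  | zero => simpa using realised_one n a
  | succ k ih => rw [pow_succ]; exact ih.mul hπ

/-- The symmetric group being finite, an inverse is a nonnegative power. -/
lemma Realised.inv {n a : ℕ} {π : Equiv.Perm (Fin n)} (hπ : Realised n a π) :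
    Realised n a π⁻¹ := by
  have h : π⁻¹ = π ^ (orderOf π - 1) := by
    rw [inv_eq_iff_mul_eq_one, ← pow_succ', Nat.sub_add_cancel (orderOf_pos π),
      pow_orderOf_eq_one]
  rw [h]
  exact hπ.pow _

lemma realised_letterPerm (n a : ℕ) (c : Bool) : Realised n a (letterPerm n c) := by
  have h : Realised n a (letterPerm n c)⁻¹ :=
    ⟨[c], fun S => by rw [DFA.evalFrom_singleton, step_starFam]⟩
  simpa using h.inv

/-- The two letters generate the symmetric group, so every permutation is realised. -/
lemma exists_word_of_perm {n : ℕ} (a : ℕ) (hn : 2 ≤ n) (π : Equiv.Perm (Fin n)) :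
    Realised n a π := by
  obtain ⟨k, rfl⟩ : ∃ k, n = k + 2 := ⟨n - 2, by omega⟩
  have hmem : π ∈ Subgroup.closure
      ({finRotate (k + 2), Equiv.swap 0 (finRotate (k + 2) 0)} :
        Set (Equiv.Perm (Fin (k + 2)))) := by
    rw [Equiv.Perm.closure_cycle_adjacent_swap isCycle_finRotate support_finRotate 0]
    trivial
  have hb : Equiv.swap 0 (finRotate (k + 2) 0) = letterPerm (k + 2) true := by
    simp [letterPerm, swap01]
  induction hmem using Subgroup.closure_induction with
  | mem x hx =>
    rcases hx with rfl | rfl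
    · exact realised_letterPerm _ a false
    · rw [hb]; exact realised_letterPerm _ a true
  | one => exact realised_one _ a
  | mul x y _ _ hx hy => exact hx.mul hy
  | inv x _ hx => exact hx.inv

lemma card_seg {n k : ℕ} (h : k ≤ n) : (seg n k).card = k := by
  simp [seg, Fin.card_filter_val_lt, h]

/-- The symmetric group acts transitively on subsets of a given size. -/
lemma exists_perm_mem_iff {n : ℕ} {X Y : Finset (Fin n)} (h : X.card = Y.card) :
    ∃ π : Equiv.Perm (Fin n), ∀ x, π x ∈ Y ↔ x ∈ X := by
  let e : {x // x ∈ X} ≃ {x // x ∈ Y} := Finset.equivOfCardEq h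
  refine ⟨e.extendSubtype, fun x => ⟨fun hx => ?_, fun hx => e.extendSubtype_mem x hx⟩⟩
  by_contra hX
  exact e.extendSubtype_not_mem x hX hx

lemma starFam_mem_accept {n a : ℕ} (h : a ≤ n) (S : Finset (Fin n)) :
    starFam n a S ∈ (reverseDFA (witnessDFA n a)).accept ↔ S ⊆ seg n a := by
  change (seg n a).card = a ∧ S ⊆ seg n a ↔ _
  simp [card_seg h]

lemma exists_distinguishing_word {n a : ℕ} (ha : 2 ≤ a) (hn : a < n)
    {S T : Finset (Fin n)} (hS : S.card = a - 1) (hT : T.card = a - 1) (hne : S ≠ T) :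
    ∃ w : List Bool,
      ¬((reverseDFA (witnessDFA n a)).evalFrom (starFam n a S) w ∈
          (reverseDFA (witnessDFA n a)).accept ↔
        (reverseDFA (witnessDFA n a)).evalFrom (starFam n a T) w ∈
          (reverseDFA (witnessDFA n a)).accept) := by
  have hTS : ¬ T ⊆ S := fun h => hne (Finset.eq_of_subset_of_card_le h (by omega)).symm
  obtain ⟨t, htT, htS⟩ := Finset.not_subset.1 hTS
  obtain ⟨X, hSX, hXt, hX⟩ : ∃ X, S ⊆ X ∧ X ⊆ Finset.univ.erase t ∧ X.card = a := by
    refine Finset.exists_subsuperset_card_eq (fun x hx => ?_) (by omega) ?_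
    · exact Finset.mem_erase.2 ⟨fun h => htS (h ▸ hx), Finset.mem_univ x⟩
    · rw [Finset.card_erase_of_mem (Finset.mem_univ t), Finset.card_univ, Fintype.card_fin]
      omega
  obtain ⟨π, hπ⟩ := exists_perm_mem_iff (hX.trans (card_seg hn.le).symm)
  obtain ⟨w, hw⟩ := exists_word_of_perm a (by omega) π
  refine ⟨w, fun h => ?_⟩
  rw [hw, hw, starFam_mem_accept hn.le, starFam_mem_accept hn.le] at h
  have hT' := h.1 fun y hy => by
    obtain ⟨x, hx, rfl⟩ := Finset.mem_map.1 hy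
    exact (hπ x).2 (hSX hx)
  have htX : t ∈ X := (hπ t).1 (hT' (Finset.mem_map.2 ⟨t, htT, rfl⟩))
  simpa using hXt htX

/-- Every star of an `(a - 1)`-element set is reachable from the initial state. -/
lemma exists_word_reaching {n a : ℕ} (ha : 2 ≤ a) (hn : a < n)
    {S : Finset (Fin n)} (hS : S.card = a - 1) :
    ∃ w : List Bool, (reverseDFA (witnessDFA n a)).eval w = starFam n a S := by
  have hc : (seg n (a - 1)).card = S.card := by rw [hS, card_seg (by omega)]
  obtain ⟨π, hπ⟩ := exists_perm_mem_iff hc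
  obtain ⟨w, hw⟩ := exists_word_of_perm a (by omega) π
  refine ⟨w, (hw (seg n (a - 1))).trans ?_⟩
  congr 1
  refine Finset.eq_of_subset_of_card_le (fun y hy => ?_) (by rw [Finset.card_map, hc])
  obtain ⟨x, hx, rfl⟩ := Finset.mem_map.1 hy
  exact (hπ x).2 hx

/-- Any two distinct reachable states of the reverse subset
automaton `A_{m,α}^R` are distinguishable: for `(α-1)`-element subsets `S₀ ≠ T` of
`[n]` there is a word `w ∈ {a,b}*` such that exactly one of `δ^R(𝒮(S₀), w)` and
`δ^R(𝒮(T), w)` is accepting (i.e. contains `q_I = {1, …, α}`). Consequently, the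
reachable part of `A_{m,α}^R` is a minimal DFA: every complete DFA accepting its
language has at least `C(n, α-1)` states (the number of reachable states). -/
theorem stmt14 (m a n : ℕ) (hm : 2 ≤ m) (ha : 2 ≤ a) (hn : n = m + a - 1) :
    (∀ S₀ T : Finset (Fin n), S₀.card = a - 1 → T.card = a - 1 → S₀ ≠ T →
      ∃ w : List Bool,
        ¬((reverseDFA (witnessDFA n a)).evalFrom (starFam n a S₀) w ∈
            (reverseDFA (witnessDFA n a)).accept ↔
          (reverseDFA (witnessDFA n a)).evalFrom (starFam n a T) w ∈
            (reverseDFA (witnessDFA n a)).accept)) ∧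
    (∀ (σ : Type) (_ : Finite σ) (M : DFA Bool σ),
      M.accepts = (reverseDFA (witnessDFA n a)).accepts →
        n.choose (a - 1) ≤ Nat.card σ) := by
  have han : a < n := by omega
  refine ⟨fun S₀ T hS hT hne => exists_distinguishing_word ha han hS hT hne, ?_⟩
  intro σ _ M hM
  let P := {S : Finset (Fin n) // S.card = a - 1}
  choose w hw using fun S : P => exists_word_reaching ha han S.2
  have hinj : Function.Injective fun S : P => M.eval (w S) := by
    intro S T hST
    by_contra hne
    obtain ⟨u, hu⟩ := exists_distinguishing_word ha han S.2 T.2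
      (fun h => hne (Subtype.ext h))
    -- After `w S` the reverse automaton is in `𝒮(S)`, so acceptance of `w S ++ u` by `M`
    -- decides acceptance of `u` from `𝒮(S)`.
    have key : ∀ R : P, (reverseDFA (witnessDFA n a)).evalFrom (starFam n a R.1) u ∈
        (reverseDFA (witnessDFA n a)).accept ↔ M.evalFrom (M.eval (w R)) u ∈ M.accept := by
      intro R
      have h : w R ++ u ∈ M.accepts ↔ w R ++ u ∈ (reverseDFA (witnessDFA n a)).accepts := by
        rw [hM]
      rw [DFA.mem_accepts, DFA.mem_accepts, DFA.eval, DFA.eval, DFA.evalFrom_of_append,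
        DFA.evalFrom_of_append] at h
      rw [← hw R]
      exact h.symm
    apply hu
    rw [key S, key T]
    exact iff_of_eq (congrArg (fun q => M.evalFrom q u ∈ M.accept) hST)
  have hcard : Nat.card P = n.choose (a - 1) := by
    rw [Nat.card_eq_fintype_card, Fintype.card_finset_len, Fintype.card_fin]
  rw [← hcard]
  exact Nat.card_le_card_of_injective _ hinj
end

section
/- The accepting-state spectrum of reversal for permutation automata is exactly: g^{asc}_{R,PFA}(0) = {0}; g^{asc}_{R,PFA}(1) = {1}; and g^{asc}_{R,PFA}(m) = {α ∈ ℕ : α ≥ 2} for every m ≥ 2. In particular, for m ≥ 2: every α ≥ 2 is attained, while α = 0 and α = 1 are not attained. -/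
/-- The accepting-state spectrum of reversal for permutation automata:
`g^asc_{R,PFA}(m)` is the set of all `α` such that some language `K` (over some
alphabet) accepted by a permutation automaton (a finite complete DFA all of whose
letters act bijectively on the states) satisfies `asc(K) = m` and `asc(K^R) = α`. -/
def revSpectrum (m : ℕ) : Set ℕ :=
  {a | ∃ (α σ : Type) (_ : Finite σ) (M : DFA α σ),
    (∀ c : α, Function.Bijective (fun q => M.step q c)) ∧
    asc M.accepts = m ∧ asc M.accepts.reverse = a}

open Pointwise

/-! ### Accepting-state complexity and left quotients -/

theorem asc_eq_ncard {α : Type} {L : Language α} (hL : L.IsRegular) :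
    asc L = (L.leftQuotient '' {w | w ∈ L}).ncard := by
  have hfin := hL.finite_range_leftQuotient
  have hne : {k | ∃ (σ : Type) (_ : Finite σ) (M : DFA α σ),
      M.accepts = L ∧ Nat.card M.accept = k}.Nonempty := by
    obtain ⟨σ, _, M, hM⟩ := hL
    exact ⟨_, σ, inferInstance, M, hM, rfl⟩
  apply le_antisymm
  · apply Nat.sInf_le
    refine ⟨Set.range L.leftQuotient, hfin, L.toDFA, L.accepts_toDFA, ?_⟩
    rw [Nat.card_coe_set_eq, ← Set.ncard_image_of_injective _ Subtype.val_injective]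
    congr 1
    ext K
    constructor
    · rintro ⟨⟨_, w, rfl⟩, hw, rfl⟩
      refine ⟨w, ?_, rfl⟩
      simpa using hw
    · rintro ⟨w, hw, rfl⟩
      refine ⟨⟨_, w, rfl⟩, ?_, rfl⟩
      simpa using hw
  · obtain ⟨σ, _, M, hM, hk⟩ := Nat.sInf_mem hne
    change _ ≤ sInf _
    rw [← hk, Nat.card_coe_set_eq]
    -- The quotient by `w` depends only on the state of `M` reached by `w`.
    refine le_trans (Set.ncard_le_ncard ?_ (Set.toFinite _))
      (Set.ncard_image_le (f := M.acceptsFrom) (Set.toFinite M.accept))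
    rintro _ ⟨w, hw, rfl⟩
    refine ⟨M.eval w, ?_, ?_⟩
    · rw [← DFA.mem_accepts, hM]
      exact hw
    · rw [← hM, Language.leftQuotient_accepts_apply]

theorem asc_eq_zero_iff {α : Type} {L : Language α} (hL : L.IsRegular) :
    asc L = 0 ↔ ∀ w, w ∉ L := by
  have hfin : (L.leftQuotient '' {w | w ∈ L}).Finite :=
    hL.finite_range_leftQuotient.subset (Set.image_subset_range _ _)
  rw [asc_eq_ncard hL, Set.ncard_eq_zero hfin, Set.image_eq_empty, Set.eq_empty_iff_forall_notMem]
  rfl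

theorem asc_eq_one_iff {α : Type} {L : Language α} (hL : L.IsRegular) :
    asc L = 1 ↔ (∃ w, w ∈ L) ∧ ∀ u ∈ L, ∀ v ∈ L, ∀ z, u ++ z ∈ L ↔ v ++ z ∈ L := by
  rw [asc_eq_ncard hL, Set.ncard_eq_one]
  constructor
  · rintro ⟨K, hK⟩
    constructor
    · have : K ∈ L.leftQuotient '' {w | w ∈ L} := hK ▸ rfl
      obtain ⟨w, hw, -⟩ := this
      exact ⟨w, hw⟩
    · have key : ∀ u ∈ L, L.leftQuotient u = K := fun u hu => by
        have : L.leftQuotient u ∈ L.leftQuotient '' {w | w ∈ L} := ⟨u, hu, rfl⟩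
        rwa [hK] at this
      intro u hu v hv z
      rw [← Language.mem_leftQuotient, ← Language.mem_leftQuotient, key u hu, key v hv]
  · rintro ⟨⟨w, hw⟩, h⟩
    refine ⟨L.leftQuotient w, ?_⟩
    ext K
    constructor
    · rintro ⟨u, hu, rfl⟩
      exact Language.ext fun z => h u hu w hw z
    · rintro rfl
      exact ⟨w, hw, rfl⟩

/-! ### Invariance of complexities `0` and `1` under reversal -/

/-- Every word `u` has a formal inverse `u'` for the syntactic congruence of `L`: both `u ++ u'` and
`u' ++ u` can be inserted into or deleted from any word without affecting membership in `L`. -/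
def HasWordInverses {α : Type} (L : Language α) : Prop :=
  ∀ u, ∃ u', (∀ x y, x ++ (u ++ u') ++ y ∈ L ↔ x ++ y ∈ L) ∧
    (∀ x y, x ++ (u' ++ u) ++ y ∈ L ↔ x ++ y ∈ L)

theorem HasWordInverses.reverse {α : Type} {L : Language α} (h : HasWordInverses L) :
    HasWordInverses L.reverse := by
  intro u
  obtain ⟨u', h1, h2⟩ := h u.reverse
  refine ⟨u'.reverse, fun x y => ?_, fun x y => ?_⟩
  · simpa [Language.mem_reverse] using h2 y.reverse x.reverse
  · simpa [Language.mem_reverse] using h1 y.reverse x.reverse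

theorem hasWordInverses_accepts {α σ : Type} [Finite σ] (M : DFA α σ)
    (hM : ∀ c : α, Function.Bijective (fun q => M.step q c)) : HasWordInverses M.accepts := by
  intro u
  have hbij : Function.Bijective (fun q => M.evalFrom q u) := by
    induction u with
    | nil => exact Function.bijective_id
    | cons c u ih => exact ih.comp (hM c)
  let e : Equiv.Perm σ := Equiv.ofBijective _ hbij
  have he : ∀ q, M.evalFrom q u = e q := fun q => rfl
  have hpow : ∀ n q, M.evalFrom q (List.replicate n u).flatten = (e ^ n) q := by
    intro n
    induction n with
    | zero => intro q; simp
    | succ n ih =>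
      intro q
      rw [List.replicate_succ, List.flatten_cons, DFA.evalFrom_of_append, ih, he, pow_succ,
        Equiv.Perm.mul_apply]
  -- If `u` acts with order `k`, its formal inverse is `u` repeated `k - 1` times.
  have hk : orderOf e - 1 + 1 = orderOf e := Nat.sub_add_cancel (orderOf_pos e)
  refine ⟨(List.replicate (orderOf e - 1) u).flatten, fun x y => ?_, fun x y => ?_⟩
  · have : ∀ q, (e ^ (orderOf e - 1)) (e q) = q := fun q => by
      rw [← Equiv.Perm.mul_apply, ← pow_succ, hk, pow_orderOf_eq_one, Equiv.Perm.one_apply]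
    simp only [DFA.mem_accepts, DFA.eval, DFA.evalFrom_of_append, hpow, he, this]
  · have : ∀ q, e ((e ^ (orderOf e - 1)) q) = q := fun q => by
      rw [← Equiv.Perm.mul_apply, ← pow_succ', hk, pow_orderOf_eq_one, Equiv.Perm.one_apply]
    simp only [DFA.mem_accepts, DFA.eval, DFA.evalFrom_of_append, hpow, he, this]

theorem asc_reverse_eq_one {α : Type} {L : Language α} (hL : L.IsRegular)
    (hinv : HasWordInverses L) (h : asc L = 1) : asc L.reverse = 1 := by
  rw [asc_eq_one_iff hL] at h
  obtain ⟨⟨w, hw⟩, h⟩ := h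
  have key : ∀ u ∈ L, ∀ v ∈ L, ∀ x, x ++ u ∈ L → x ++ v ∈ L := by
    intro u hu v hv x hx
    obtain ⟨u', h1, -⟩ := hinv u
    have e1 : u ++ (u' ++ v) ∈ L := by simpa using (h1 [] v).2 hv
    have e2 : (x ++ u) ++ (u' ++ v) ∈ L := (h u hu _ hx _).1 e1
    exact (h1 x v).1 (by simpa using e2)
  rw [asc_eq_one_iff hL.reverse]
  refine ⟨⟨w.reverse, by simpa [Language.mem_reverse] using hw⟩, fun u hu v hv z => ?_⟩
  simp only [Language.mem_reverse, List.reverse_append] at hu hv ⊢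
  exact ⟨key _ hu _ hv _, key _ hv _ hu _⟩

theorem asc_reverse_eq_one_iff {α : Type} {L : Language α} (hL : L.IsRegular)
    (hinv : HasWordInverses L) : asc L.reverse = 1 ↔ asc L = 1 := by
  refine ⟨fun h => ?_, asc_reverse_eq_one hL hinv⟩
  simpa using asc_reverse_eq_one hL.reverse hinv.reverse h

theorem asc_reverse_eq_zero_iff {α : Type} {L : Language α} (hL : L.IsRegular) :
    asc L.reverse = 0 ↔ asc L = 0 := by
  rw [asc_eq_zero_iff hL, asc_eq_zero_iff hL.reverse]
  refine ⟨fun h w hw => h w.reverse ?_, fun h w hw => h _ hw⟩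
  simpa [Language.mem_reverse] using hw

/-! ### Languages of words with product in `A * B` -/

/-- `A` and `B` act freely on the orbit of `p`, and each of them fixes every point other than `p`
in the orbit of `p` under the other one, so that the two orbits are glued at `p` only. -/
structure WedgeAt {X : Type} (A B : Subgroup (Equiv.Perm X)) (p : X) : Prop where
  free_left : ∀ a ∈ A, a p = p → a = 1
  free_right : ∀ b ∈ B, b p = p → b = 1
  fix_left : ∀ a ∈ A, ∀ b ∈ B, a p ≠ p → b (a p) = a p
  fix_right : ∀ a ∈ A, ∀ b ∈ B, b p ≠ p → a (b p) = b p

theorem WedgeAt.symm {X : Type} {A B : Subgroup (Equiv.Perm X)} {p : X} (h : WedgeAt A B p) :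
    WedgeAt B A p :=
  ⟨h.free_right, h.free_left, fun b hb a ha => h.fix_right a ha b hb,
    fun b hb a ha => h.fix_left a ha b hb⟩

theorem WedgeAt.eq_one_or_eq_one {X : Type} {A B : Subgroup (Equiv.Perm X)} {p : X}
    (h : WedgeAt A B p) {a b : Equiv.Perm X} (ha : a ∈ A) (hb : b ∈ B)
    (hab : b * a ∈ (A : Set (Equiv.Perm X)) * (B : Set (Equiv.Perm X))) : a = 1 ∨ b = 1 := by
  obtain ⟨c, hc, d, hd, he⟩ := hab
  simp only [SetLike.mem_coe] at hc hd
  by_contra! hne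
  obtain ⟨ha1, hb1⟩ := hne
  have hap : a p ≠ p := fun e => ha1 (h.free_left a ha e)
  have hbp : b p ≠ p := fun e => hb1 (h.free_right b hb e)
  by_cases hdp : d p = p
  · have hd_one := h.free_right d hd hdp
    -- Since `d = 1`, `b` lies in `A ∩ B` and fixes its own image `b p`.
    have hbA : b ∈ A := by
      have : b = c * a⁻¹ := by rw [eq_mul_inv_iff_mul_eq, ← he, hd_one]; simp
      rw [this]
      exact A.mul_mem hc (A.inv_mem ha)
    exact hbp (b.injective (h.fix_left b hbA b hb hbp))
  · -- Evaluating `b * a = c * d` at `p` gives `a p = d p`, a point fixed by `d`.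
    have e : c (d p) = b (a p) := by
      simpa using congrArg (fun f : Equiv.Perm X => f p) he
    rw [h.fix_left a ha b hb hap, h.fix_right c hc d hd hdp] at e
    have := h.fix_left a ha d hd hap
    rw [← e] at this
    exact hdp (d.injective this)

/-- The words over `G` whose product, after relabelling the letters by `f`, lies in `A * B`. -/
def mulLang {G : Type} [Group G] (f : G → G) (A B : Subgroup G) : Language G :=
  {w | (w.map f).prod ∈ (A : Set G) * (B : Set G)}

theorem mem_mulLang {G : Type} [Group G] {f : G → G} {A B : Subgroup G} {w : List G} :
    w ∈ mulLang f A B ↔ (w.map f).prod ∈ (A : Set G) * (B : Set G) := Iff.rfl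

theorem mul_mem_subgroup_mul_iff {G : Type} [Group G] {A B : Subgroup G} {a g : G} (ha : a ∈ A) :
    a * g ∈ (A : Set G) * (B : Set G) ↔ g ∈ (A : Set G) * (B : Set G) := by
  constructor
  · rintro ⟨x, hx, y, hy, he⟩
    refine ⟨a⁻¹ * x, A.mul_mem (A.inv_mem ha) hx, y, hy, ?_⟩
    simp only at he ⊢
    rw [mul_assoc, he, inv_mul_cancel_left]
  · rintro ⟨x, hx, y, hy, rfl⟩
    exact ⟨a * x, A.mul_mem ha hx, y, hy, mul_assoc _ _ _⟩

theorem asc_mulLang {X : Type} {A B : Subgroup (Equiv.Perm X)} {p : X} (h : WedgeAt A B p)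
    (hA : A ≠ ⊥) {f : Equiv.Perm X → Equiv.Perm X} (hf : Function.Surjective f)
    (hreg : (mulLang f A B).IsRegular) : asc (mulLang f A B) = Nat.card B := by
  rw [asc_eq_ncard hreg]
  let Q : B → Language (Equiv.Perm X) := fun b =>
    {z | (b : Equiv.Perm X) * (z.map f).prod ∈
      (A : Set (Equiv.Perm X)) * (B : Set (Equiv.Perm X))}
  have hQ : Function.Injective Q := by
    intro b b' hbb
    obtain ⟨a, ha, ha1⟩ := A.bot_or_exists_ne_one.resolve_left hA
    -- A letter `z` with `b * f z = a`; then `b' * f z = (b' * b⁻¹) * a`.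
    obtain ⟨z, hz⟩ := hf ((b : Equiv.Perm X)⁻¹ * a)
    have h1 : [z] ∈ Q b := by
      change (b : Equiv.Perm X) * ([z].map f).prod ∈
        (A : Set (Equiv.Perm X)) * (B : Set (Equiv.Perm X))
      simp only [List.map_cons, List.map_nil, List.prod_singleton, hz, mul_inv_cancel_left]
      exact ⟨a, ha, 1, B.one_mem, mul_one a⟩
    rw [hbb] at h1
    have h2 : ((b' * b⁻¹ : B) : Equiv.Perm X) * a ∈
        (A : Set (Equiv.Perm X)) * (B : Set (Equiv.Perm X)) := by
      have h3 : (b' : Equiv.Perm X) * ([z].map f).prod ∈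
        (A : Set (Equiv.Perm X)) * (B : Set (Equiv.Perm X)) := h1
      simpa [hz, mul_assoc] using h3
    have h4 := (h.eq_one_or_eq_one ha (b' * b⁻¹ : B).2 h2).resolve_left ha1
    have h5 : b' * b⁻¹ = 1 := Subtype.ext h4
    exact (mul_inv_eq_one.1 h5).symm
  have himg : (mulLang f A B).leftQuotient '' {w | w ∈ mulLang f A B} = Set.range Q := by
    have key : ∀ (w : List (Equiv.Perm X)) (a b : Equiv.Perm X) (_ : a ∈ A) (hb : b ∈ B),
        a * b = (w.map f).prod → (mulLang f A B).leftQuotient w = Q ⟨b, hb⟩ := by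
      intro w a b ha hb hw
      refine Language.ext fun z => ?_
      rw [Language.mem_leftQuotient, mem_mulLang, List.map_append, List.prod_append, ← hw,
        mul_assoc, mul_mem_subgroup_mul_iff ha]
      rfl
    ext K
    constructor
    · rintro ⟨w, ⟨a, ha, b, hb, hw⟩, rfl⟩
      exact ⟨⟨b, hb⟩, (key w a b ha hb hw).symm⟩
    · rintro ⟨⟨b, hb⟩, rfl⟩
      obtain ⟨z, hz⟩ := hf b
      have hz' : 1 * b = ([z].map f).prod := by simp [hz]
      exact ⟨[z], ⟨1, A.one_mem, b, hb, hz'⟩, key [z] 1 b A.one_mem hb hz'⟩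
  rw [himg, ← Nat.card_coe_set_eq, Nat.card_range_of_injective hQ]

theorem reverse_mulLang {G : Type} [Group G] (A B : Subgroup G) :
    (mulLang id A B).reverse = mulLang (fun g => g⁻¹) B A := by
  refine Language.ext fun w => ?_
  rw [Language.mem_reverse, mem_mulLang, mem_mulLang, List.map_id, ← Set.inv_mem_inv,
    mul_inv_rev, inv_coe_set, inv_coe_set, List.prod_inv_reverse, List.map_reverse,
    List.reverse_reverse]

/-- The permutation automaton on the group `G` itself, with letters acting by right
multiplication, that accepts `mulLang id A B`. -/
def mulDFA {G : Type} [Group G] (A B : Subgroup G) : DFA G G where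
  step q g := q * g
  start := 1
  accept := (A : Set G) * (B : Set G)

theorem accepts_mulDFA {G : Type} [Group G] (A B : Subgroup G) :
    (mulDFA A B).accepts = mulLang id A B := by
  have : ∀ (w : List G) (q : G), (mulDFA A B).evalFrom q w = q * w.prod := by
    intro w
    induction w with
    | nil => intro q; simp
    | cons c w ih =>
      intro q
      rw [DFA.evalFrom_cons, ih, List.prod_cons, ← mul_assoc]
      rfl
  refine Language.ext fun w => ?_
  rw [DFA.mem_accepts, DFA.eval, this, mem_mulLang, List.map_id]
  change 1 * _ ∈ _ ↔ _
  rw [one_mul]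
  rfl

/-! ### Two cyclic groups glued at a point -/

/-- `Q` acting on the fibre `{1} × Q` of `P × Q` by left translation, and fixing all other
points. -/
def fibreHom (P Q : Type) [Group P] [Group Q] [DecidableEq P] :
    Q →* Equiv.Perm (P × Q) where
  toFun b := Equiv.Perm.prodExtendRight 1 (Equiv.mulLeft b)
  map_one' := by
    ext ⟨x, y⟩ <;> by_cases hx : x = 1 <;> simp [Equiv.Perm.prodExtendRight, hx]
  map_mul' b c := by
    ext ⟨x, y⟩ <;> by_cases hx : x = 1 <;>
      simp [Equiv.Perm.prodExtendRight, hx]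

theorem fibreHom_apply {P Q : Type} [Group P] [Group Q] [DecidableEq P] (b : Q) (x : P) (y : Q) :
    fibreHom P Q b (x, y) = if x = 1 then (x, b * y) else (x, y) := by
  by_cases hx : x = 1 <;> simp [fibreHom, Equiv.Perm.prodExtendRight, hx]

/-- `P` acting on `P × {1}` by left translation, and fixing all other points of `P × Q`. -/
def cofibreHom (P Q : Type) [Group P] [Group Q] [DecidableEq Q] :
    P →* Equiv.Perm (P × Q) :=
  (Equiv.prodComm Q P).permCongrHom.toMonoidHom.comp (fibreHom Q P)

theorem cofibreHom_apply {P Q : Type} [Group P] [Group Q] [DecidableEq Q] (a : P) (x : P) (y : Q) :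
    cofibreHom P Q a (x, y) = if y = 1 then (a * x, y) else (x, y) := by
  by_cases hy : y = 1 <;> simp [cofibreHom, fibreHom_apply, hy, Equiv.permCongrHom]

theorem exists_wedgeAt {k l : ℕ} (hk : 2 ≤ k) (hl : 2 ≤ l) :
    ∃ (X : Type) (_ : Finite X) (A B : Subgroup (Equiv.Perm X)) (p : X),
      WedgeAt A B p ∧ Nat.card A = k ∧ Nat.card B = l := by
  have : NeZero k := ⟨by omega⟩
  have : NeZero l := ⟨by omega⟩
  let P := Multiplicative (ZMod k)
  let Q := Multiplicative (ZMod l)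
  have hP : Finite P := inferInstanceAs (Finite (ZMod k))
  have hQ : Finite Q := inferInstanceAs (Finite (ZMod l))
  have : DecidableEq P := Classical.decEq P
  have : DecidableEq Q := Classical.decEq Q
  have hA : ∀ a : P, cofibreHom P Q a (1, 1) = (a, 1) := fun a => by simp [cofibreHom_apply]
  have hB : ∀ b : Q, fibreHom P Q b (1, 1) = (1, b) := fun b => by simp [fibreHom_apply]
  refine ⟨P × Q, inferInstance, (cofibreHom P Q).range, (fibreHom P Q).range, (1, 1),
    ⟨?_, ?_, ?_, ?_⟩, ?_, ?_⟩
  · rintro _ ⟨a, rfl⟩ h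
    rw [hA] at h
    have h1 : a = 1 := (Prod.ext_iff.1 h).1
    rw [h1, map_one]
  · rintro _ ⟨b, rfl⟩ h
    rw [hB] at h
    have h1 : b = 1 := (Prod.ext_iff.1 h).2
    rw [h1, map_one]
  · rintro _ ⟨a, rfl⟩ _ ⟨b, rfl⟩ h
    rw [hA] at h ⊢
    rw [fibreHom_apply, if_neg]
    rintro rfl
    exact h rfl
  · rintro _ ⟨a, rfl⟩ _ ⟨b, rfl⟩ h
    rw [hB] at h ⊢
    rw [cofibreHom_apply, if_neg]
    rintro rfl
    exact h rfl
  · have hinj : Function.Injective (cofibreHom P Q) := fun a a' h => by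
      have := congrArg (fun e : Equiv.Perm (P × Q) => e (1, 1)) h
      simp only [hA] at this
      exact (Prod.ext_iff.1 this).1
    rw [← Nat.card_congr (MonoidHom.ofInjective hinj).toEquiv]
    exact Nat.card_zmod k
  · have hinj : Function.Injective (fibreHom P Q) := fun b b' h => by
      have := congrArg (fun e : Equiv.Perm (P × Q) => e (1, 1)) h
      simp only [hB] at this
      exact (Prod.ext_iff.1 this).2
    rw [← Nat.card_congr (MonoidHom.ofInjective hinj).toEquiv]
    exact Nat.card_zmod l

theorem mem_revSpectrum {m a : ℕ} (hm : 2 ≤ m) (ha : 2 ≤ a) : a ∈ revSpectrum m := by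
  obtain ⟨X, _, A, B, p, h, hA, hB⟩ := exists_wedgeAt ha hm
  have hreg : (mulLang id A B).IsRegular := by
    have : Fintype (Equiv.Perm X) := Fintype.ofFinite _
    exact ⟨_, this, mulDFA A B, accepts_mulDFA A B⟩
  have hA' : A ≠ ⊥ := by
    rintro rfl
    rw [Subgroup.card_bot] at hA
    omega
  have hB' : B ≠ ⊥ := by
    rintro rfl
    rw [Subgroup.card_bot] at hB
    omega
  refine ⟨Equiv.Perm X, Equiv.Perm X, inferInstance, mulDFA A B,
    fun c => (Equiv.mulRight c).bijective, ?_, ?_⟩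
  · rw [accepts_mulDFA, asc_mulLang h hA' Function.surjective_id hreg, hB]
  · have hreg' := hreg.reverse
    rw [accepts_mulDFA]
    rw [reverse_mulLang] at hreg' ⊢
    rw [asc_mulLang h.symm hB' inv_surjective hreg', hA]

/-! ### The spectrum -/

theorem asc_reverse_cases {m a : ℕ} (h : a ∈ revSpectrum m) :
    (a = 0 ↔ m = 0) ∧ (a = 1 ↔ m = 1) := by
  obtain ⟨α, σ, _, M, hM, rfl, rfl⟩ := h
  have hreg : M.accepts.IsRegular := ⟨σ, Fintype.ofFinite σ, M, rfl⟩
  exact ⟨asc_reverse_eq_zero_iff hreg,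
    asc_reverse_eq_one_iff hreg (hasWordInverses_accepts M hM)⟩

theorem mem_revSpectrum_zero : 0 ∈ revSpectrum 0 := by
  let M : DFA Unit Unit := ⟨fun q _ => q, (), ∅⟩
  have hreg : M.accepts.IsRegular := ⟨Unit, inferInstance, M, rfl⟩
  have h0 : asc M.accepts = 0 := (asc_eq_zero_iff hreg).2 fun w hw => hw
  exact ⟨Unit, Unit, inferInstance, M, fun _ => Function.bijective_id, h0,
    (asc_reverse_eq_zero_iff hreg).2 h0⟩

theorem mem_revSpectrum_one : 1 ∈ revSpectrum 1 := by
  let M : DFA Unit Unit := ⟨fun q _ => q, (), Set.univ⟩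
  have hreg : M.accepts.IsRegular := ⟨Unit, inferInstance, M, rfl⟩
  have hall : ∀ w, w ∈ M.accepts := fun w => Set.mem_univ _
  have h1 : asc M.accepts = 1 :=
    (asc_eq_one_iff hreg).2 ⟨⟨[], hall _⟩, fun _ _ _ _ _ => iff_of_true (hall _) (hall _)⟩
  have hM : ∀ c, Function.Bijective (fun q => M.step q c) := fun _ => Function.bijective_id
  exact ⟨Unit, Unit, inferInstance, M, hM, h1,
    asc_reverse_eq_one hreg (hasWordInverses_accepts M hM) h1⟩

/-- The accepting-state spectrum of reversal for permutation
automata is exactly: `g^asc_{R,PFA}(0) = {0}`, `g^asc_{R,PFA}(1) = {1}`, and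
`g^asc_{R,PFA}(m) = {α : α ≥ 2}` for every `m ≥ 2` (so for `m ≥ 2` every `α ≥ 2` is
attained while `α = 0` and `α = 1` are not). -/
theorem stmt17 :
    revSpectrum 0 = {0} ∧ revSpectrum 1 = {1} ∧
    ∀ m : ℕ, 2 ≤ m → revSpectrum m = {a : ℕ | 2 ≤ a} := by
  refine ⟨?_, ?_, fun m hm => ?_⟩
  · ext a
    refine ⟨fun h => (asc_reverse_cases h).1.2 rfl, ?_⟩
    rintro rfl
    exact mem_revSpectrum_zero
  · ext a
    refine ⟨fun h => (asc_reverse_cases h).2.2 rfl, ?_⟩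
    rintro rfl
    exact mem_revSpectrum_one
  · ext a
    refine ⟨fun h => ?_, fun ha => mem_revSpectrum hm ha⟩
    have h' := asc_reverse_cases h
    change 2 ≤ a
    omega
end
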